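/- Let $T$ and $S$ be commuting invertible ergodic measure preserving transformations of a probability space $(X,\mathcal{X},\mu)$. Then for every $k\geq 1$ the Host–Kra factor $\sigma$-algebras coincide: $\mathcal{Z}_{k}(X,T) = \mathcal{Z}_{k}(X,S)$. -/

import Mathlib

open MeasureTheory Filter Finset

/-- The spaces `X^{[k]} = X^{2^k}`, realized as iterated squares. -/
def HKBox (X : Type*) : ℕ → Type _
  | 0 => X
  | (k+1) => HKBox X k × HKBox X k

def HKBox.instMS (X : Type*) [m : MeasurableSpace X] : ∀ k, MeasurableSpace (HKBox X k)
  | 0 => m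
  | (k+1) => @Prod.instMeasurableSpace _ _ (HKBox.instMS X k) (HKBox.instMS X k)

instance (X : Type*) [MeasurableSpace X] (k : ℕ) : MeasurableSpace (HKBox X k) :=
  HKBox.instMS X k

/-- The diagonal transformation `T^{[k]} = T × ⋯ × T` on `X^{[k]}`. -/
def HKBox.map {X : Type*} (T : X → X) : ∀ k, HKBox X k → HKBox X k
  | 0 => T
  | (k+1) => fun p => (HKBox.map T k p.1, HKBox.map T k p.2)

/-- The σ-algebra of invariant sets of a transformation. -/
def invSigma {α : Type*} [m : MeasurableSpace α] (f : α → α) : MeasurableSpace α where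
  MeasurableSet' s := MeasurableSet s ∧ f ⁻¹' s = s
  measurableSet_empty := ⟨MeasurableSet.empty, rfl⟩
  measurableSet_compl := fun s hs => ⟨hs.1.compl, by rw [Set.preimage_compl, hs.2]⟩
  measurableSet_iUnion := fun s hs => ⟨MeasurableSet.iUnion fun i => (hs i).1, by
    rw [Set.preimage_iUnion]; exact Set.iUnion_congr fun i => (hs i).2⟩

/-- The product of `f` over all `2^k` coordinates of `X^{[k]}`. -/
def HKBox.prodFun {X : Type*} (f : X → ℝ) : ∀ k, HKBox X k → ℝ
  | 0 => f
  | (k+1) => fun p => HKBox.prodFun f k p.1 * HKBox.prodFun f k p.2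

/-- `IsHKSeq μ T ν` asserts that `ν k` is the Host–Kra box measure `μ^{[k]}` of the
system `(X, μ, T)`: `ν 0 = μ` and `ν (k+1)` is the relatively independent square of
`ν k` over the σ-algebra of `T^{[k]}`-invariant sets. -/
def IsHKSeq {X : Type*} [MeasurableSpace X] (μ : Measure X) (T : X → X)
    (ν : ∀ k, Measure (HKBox X k)) : Prop :=
  ν 0 = μ ∧ ∀ k, (∀ F' F'' : HKBox X k → ℝ, Measurable F' → Measurable F'' →
    (∃ C, ∀ x, |F' x| ≤ C) → (∃ C, ∀ x, |F'' x| ≤ C) →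
    ∫ p, F' p.1 * F'' p.2 ∂(ν (k+1)) =
      ∫ x, ((ν k)[F' | invSigma (HKBox.map T k)]) x *
        ((ν k)[F'' | invSigma (HKBox.map T k)]) x ∂(ν k))

/-- The `k`-th Host–Kra seminorm of `f`, computed from a sequence `ν` of box measures:
`⦀f⦀_k = (∫ ∏_{ε} f(x_ε) dν k)^{1/2^k}`. -/
noncomputable def HKseminorm {X : Type*} [MeasurableSpace X]
    (ν : ∀ k, Measure (HKBox X k)) (k : ℕ) (f : X → ℝ) : ℝ :=
  (∫ x, HKBox.prodFun f k x ∂(ν k)) ^ (((2 : ℝ) ^ k)⁻¹)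

/-!
Commuting ergodic `T` and `S` have the same box measures, hence the same seminorms and factors.
Indeed `μ^{[k+1]}` depends on `T` only through the `T^{[k]}`-invariant sets modulo null sets, so by
induction it suffices that `S^{[k]}` fixes all these sets up to null sets and vice versa; for
`k = 0` this is ergodicity.

Suppose `Q` commutes with `R`, fixes the `R`-invariant sets, and let `ρ` be the relatively
independent square of `ν` over them. To see that `Q × Q` fixes the `R × R`-invariant sets, split the
indicator of such a set into kernels `L` with `L(y, x) = ± L(x, y)`. For bounded `θ`, the functions
`θ(x) L(x, Qy)` and `θ(Qx) L(x, y)` have the same conditional expectation on the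
`R × id`-invariant sets, because by the mean ergodic theorem their `L²` inner products are limits of
averages of integrals in which `Q` can be moved from one argument of `L` to the other. Integrating
against `b(Qy)`, which is `R × id`-invariant, gives
`∫ θ(Qx) L(x, y) b(Qy) dρ = ∫ θ(x) L(x, y) b(y) dρ`.
-/

section

open scoped Topology InnerProductSpace ENNReal ProbabilityTheory

open MeasurableSpace (invariants invariants_le)

/-! ### Conditional expectations -/

section CondExp

variable {α : Type*} {m₁ m₂ m₀ : MeasurableSpace α} {ν : Measure α}

lemma integral_condExp_mul (hm : m₁ ≤ m₀) [SigmaFinite (ν.trim hm)] {f g : α → ℝ}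
    (hf : Integrable f ν) (hg : AEStronglyMeasurable[m₁] g ν) (hfg : Integrable (f * g) ν) :
    ∫ x, (ν[f | m₁]) x * g x ∂ν = ∫ x, f x * g x ∂ν :=
  calc ∫ x, (ν[f | m₁]) x * g x ∂ν
      = ∫ x, (ν[f * g | m₁]) x ∂ν :=
        integral_congr_ae (condExp_mul_of_aestronglyMeasurable_right hg hfg hf).symm
    _ = ∫ x, f x * g x ∂ν := integral_condExp hm

lemma ae_eq_of_integral_mul_eq {u v : α → ℝ} {a : ℝ} (hu : MemLp u 2 ν) (hv : MemLp v 2 ν)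
    (huu : ∫ x, u x * u x ∂ν = a) (hvv : ∫ x, v x * v x ∂ν = a) (huv : ∫ x, u x * v x ∂ν = a) :
    u =ᵐ[ν] v := by
  have huu_int : Integrable (fun x ↦ u x * u x) ν := hu.integrable_mul hu
  have hvv_int : Integrable (fun x ↦ v x * v x) ν := hv.integrable_mul hv
  have huv_int : Integrable (fun x ↦ 2 * (u x * v x)) ν := (hu.integrable_mul hv).const_mul 2
  have hdiff_int : Integrable (fun x ↦ u x * u x - 2 * (u x * v x)) ν := huu_int.sub huv_int
  have hsq : ∫ x, (u - v) x ^ 2 ∂ν = 0 := by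
    calc ∫ x, (u x - v x) ^ 2 ∂ν
        = ∫ x, (u x * u x - 2 * (u x * v x) + v x * v x) ∂ν := by
          congr with x; ring
      _ = 0 := by
          rw [integral_add hdiff_int hvv_int, integral_sub huu_int huv_int,
            integral_const_mul, huu, hvv, huv]
          ring
  rw [integral_eq_zero_iff_of_nonneg (fun x ↦ sq_nonneg _) (hu.sub hv).integrable_sq] at hsq
  filter_upwards [hsq] with x hx
  exact sub_eq_zero.1 (pow_eq_zero_iff two_ne_zero |>.1 hx)

lemma condExp_condExp_of_forall_exists_ae_eq [IsFiniteMeasure ν] (h₁ : m₁ ≤ m₀) (h₂ : m₂ ≤ m₀)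
    (h : ∀ s, MeasurableSet[m₂] s → ∃ t, MeasurableSet[m₁] t ∧ t =ᵐ[ν] s) {f : α → ℝ}
    (hf : Integrable f ν) :
    ν[ν[f | m₁] | m₂] =ᵐ[ν] ν[f | m₂] := by
  refine ae_eq_condExp_of_forall_setIntegral_eq h₂ hf
    (fun _ _ _ ↦ integrable_condExp.integrableOn) (fun s hs _ ↦ ?_)
    stronglyMeasurable_condExp.aestronglyMeasurable
  obtain ⟨t, ht, hts⟩ := h s hs
  calc ∫ x in s, (ν[ν[f | m₁] | m₂]) x ∂ν
      = ∫ x in s, (ν[f | m₁]) x ∂ν := setIntegral_condExp h₂ integrable_condExp hs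
    _ = ∫ x in t, (ν[f | m₁]) x ∂ν := setIntegral_congr_set hts.symm
    _ = ∫ x in t, f x ∂ν := setIntegral_condExp h₁ hf ht
    _ = ∫ x in s, f x ∂ν := setIntegral_congr_set hts

lemma integral_condExp_mul_condExp [IsFiniteMeasure ν] (hm : m₁ ≤ m₀) {f g : α → ℝ}
    (hf : MemLp f 2 ν) (hg : MemLp g 2 ν) :
    ∫ x, f x * (ν[g | m₁]) x ∂ν = ∫ x, (ν[f | m₁]) x * (ν[g | m₁]) x ∂ν :=
  (integral_condExp_mul hm (hf.integrable one_le_two)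
    stronglyMeasurable_condExp.aestronglyMeasurable
    (hf.integrable_mul (hg.condExp one_le_two))).symm

lemma condExp_ae_eq_of_condExp_condExp [IsFiniteMeasure ν] (h₁ : m₁ ≤ m₀) (h₂ : m₂ ≤ m₀)
    {f : α → ℝ} (hf : MemLp f 2 ν) (h₁₂ : ν[ν[f | m₁] | m₂] =ᵐ[ν] ν[f | m₂])
    (h₂₁ : ν[ν[f | m₂] | m₁] =ᵐ[ν] ν[f | m₁]) :
    ν[f | m₁] =ᵐ[ν] ν[f | m₂] := by
  have hf₁ : MemLp (ν[f | m₁]) 2 ν := hf.condExp one_le_two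
  have hf₂ : MemLp (ν[f | m₂]) 2 ν := hf.condExp one_le_two
  have hcross₁ : ∫ x, (ν[f | m₁]) x * (ν[f | m₁]) x ∂ν
      = ∫ x, (ν[f | m₁]) x * (ν[f | m₂]) x ∂ν := by
    simp_rw [mul_comm _ ((ν[f | m₂]) _)]
    rw [integral_condExp_mul_condExp h₁ hf₂ hf]
    exact integral_congr_ae (h₂₁.symm.mul EventuallyEq.rfl)
  have hcross₂ : ∫ x, (ν[f | m₂]) x * (ν[f | m₂]) x ∂ν
      = ∫ x, (ν[f | m₁]) x * (ν[f | m₂]) x ∂ν := by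
    rw [integral_condExp_mul_condExp h₂ hf₁ hf]
    exact integral_congr_ae (h₁₂.symm.mul EventuallyEq.rfl)
  exact ae_eq_of_integral_mul_eq hf₁ hf₂ hcross₁ hcross₂ rfl

lemma condExp_condExp_of_eq_zero_imp [IsFiniteMeasure ν] (h₁ : m₁ ≤ m₀)
    (h : ∀ g : α → ℝ, Measurable[m₀] g → (∃ C, ∀ x, |g x| ≤ C) →
      ν[g | m₁] =ᵐ[ν] 0 → ν[g | m₂] =ᵐ[ν] 0)
    {f : α → ℝ} (hf : Measurable[m₀] f) (hb : ∃ C, ∀ x, |f x| ≤ C) :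
    ν[ν[f | m₁] | m₂] =ᵐ[ν] ν[f | m₂] := by
  obtain ⟨C, hC⟩ := hb
  have hf_int : Integrable f ν := .of_bound hf.aestronglyMeasurable C (ae_of_all _ hC)
  let u : α → ℝ := fun x ↦ max (-C) (min C ((ν[f | m₁]) x))
  have hu : u =ᵐ[ν] ν[f | m₁] := by
    filter_upwards [ae_bdd_abs_condExp_of_ae_bdd_abs (m := m₁) (ae_of_all ν hC)] with x hx
    rw [abs_le] at hx
    simp only [u, min_eq_right hx.2, max_eq_right hx.1]
  have hu_meas : Measurable[m₀] u := measurable_const.max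
    (measurable_const.min (stronglyMeasurable_condExp.measurable.mono h₁ le_rfl))
  have hu_int : Integrable u ν := integrable_condExp.congr hu.symm
  have hu_bdd : ∀ x, |(f - u) x| ≤ C + |C| := fun x ↦
    (abs_sub _ _).trans (add_le_add (hC x)
      (abs_le.2 ⟨(neg_le_neg (le_abs_self C)).trans (le_max_left _ _),
        max_le (neg_le_abs C) ((min_le_left _ _).trans (le_abs_self C))⟩))
  have hzero : ν[f - u | m₁] =ᵐ[ν] 0 := by
    have huu : ν[u | m₁] =ᵐ[ν] ν[f | m₁] :=
      (condExp_congr_ae hu).trans (condExp_condExp_of_le le_rfl h₁)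
    filter_upwards [condExp_sub hf_int hu_int m₁, huu] with x hsub hx
    rw [hsub, Pi.sub_apply, hx, sub_self, Pi.zero_apply]
  filter_upwards [h _ (hf.sub hu_meas) ⟨_, hu_bdd⟩ hzero, condExp_sub hf_int hu_int m₂,
    condExp_congr_ae (m := m₂) hu] with x hx hsub hux
  rw [← hux, ← sub_eq_zero, ← neg_sub, ← Pi.sub_apply, ← hsub, hx, Pi.zero_apply, neg_zero]

lemma condExp_ae_eq_of_eq_zero_iff [IsFiniteMeasure ν] (h₁ : m₁ ≤ m₀) (h₂ : m₂ ≤ m₀)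
    (h : ∀ g : α → ℝ, Measurable[m₀] g → (∃ C, ∀ x, |g x| ≤ C) →
      (ν[g | m₁] =ᵐ[ν] 0 ↔ ν[g | m₂] =ᵐ[ν] 0))
    {f : α → ℝ} (hf : Measurable[m₀] f) (hb : ∃ C, ∀ x, |f x| ≤ C) :
    ν[f | m₁] =ᵐ[ν] ν[f | m₂] := by
  have hf_memLp : MemLp f 2 ν := by
    obtain ⟨C, hC⟩ := hb
    exact .of_bound hf.aestronglyMeasurable C (ae_of_all _ hC)
  exact condExp_ae_eq_of_condExp_condExp h₁ h₂ hf_memLp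
    (condExp_condExp_of_eq_zero_imp h₁ (fun g hg hgb ↦ (h g hg hgb).1) hf hb)
    (condExp_condExp_of_eq_zero_imp h₂ (fun g hg hgb ↦ (h g hg hgb).2) hf hb)

end CondExp

lemma integral_comp_of_measurePreserving {α β : Type*} [MeasurableSpace α] [MeasurableSpace β]
    {ρ : Measure α} {ν : Measure β} {g : α → β} (hg : MeasurePreserving g ρ ν) {F : β → ℝ}
    (hF : AEStronglyMeasurable F ν) :
    ∫ x, F (g x) ∂ρ = ∫ y, F y ∂ν := by
  rw [← hg.map_eq] at hF ⊢
  exact (integral_map hg.aemeasurable hF).symm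

lemma comp_ae_eq_comp_of_preimage_ae_eq {α β : Type*} [MeasurableSpace α] {m : MeasurableSpace β}
    {ν : Measure α} {g₁ g₂ : α → β}
    (h : ∀ s, MeasurableSet[m] s → g₁ ⁻¹' s =ᵐ[ν] g₂ ⁻¹' s) {f : β → ℝ} (hf : Measurable[m] f) :
    f ∘ g₁ =ᵐ[ν] f ∘ g₂ :=
  EventuallyEq.of_forall_separating_preimage MeasurableSet fun _ hs ↦ h _ (hf hs)

/-! ### The mean ergodic theorem -/

section MeanErgodic

variable {α β : Type*} [MeasurableSpace α] [MeasurableSpace β] {ρ : Measure α} {ν : Measure β}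
  {Φ : α → α} {R : β → β}

lemma aestronglyMeasurable_invariants_of_comp_ae_eq (hΦ : Measure.QuasiMeasurePreserving Φ ρ ρ)
    {f : α → ℝ} (hf : Measurable f) (hinv : f ∘ Φ =ᵐ[ρ] f) :
    AEStronglyMeasurable[invariants Φ] f ρ := by
  let g : α → ℝ := fun x ↦ limsup (fun n : ℕ ↦ f (Φ^[n] x)) atTop
  have hg_inv : g ∘ Φ = g := by
    funext x
    exact limsup_nat_add (fun n ↦ f (Φ^[n] x)) 1
  have hg : Measurable[invariants Φ] g := MeasurableSpace.measurable_invariants_dom.2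
    ⟨.limsup fun n ↦ hf.comp (hΦ.measurable.iterate n), fun s _ ↦ by rw [hg_inv]⟩
  have hiter : ∀ n : ℕ, f ∘ Φ^[n] =ᵐ[ρ] f := by
    intro n
    induction n with
    | zero => exact EventuallyEq.rfl
    | succ n ih =>
      rw [Function.iterate_succ, ← Function.comp_assoc]
      exact (hΦ.ae_eq_comp ih).trans hinv
  refine ⟨g, hg.stronglyMeasurable, ?_⟩
  filter_upwards [ae_all_iff.2 hiter] with x hx
  simp only [Function.comp_apply] at hx
  simp only [g, hx, limsup_const]

/-- The Koopman operator `f ↦ f ∘ Φ` on `L²`. -/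
noncomputable def koopman (hΦ : MeasurePreserving Φ ρ ρ) : Lp ℝ 2 ρ →L[ℝ] Lp ℝ 2 ρ :=
  (Lp.compMeasurePreservingₗᵢ ℝ Φ hΦ).toContinuousLinearMap

lemma koopman_iterate_toLp (hΦ : MeasurePreserving Φ ρ ρ) {g : α → ℝ} (hg : MemLp g 2 ρ) (n : ℕ) :
    (koopman hΦ)^[n] (hg.toLp g) = (hg.comp_measurePreserving (hΦ.iterate n)).toLp _ :=
  congrFun (Lp.compMeasurePreserving_iterate hΦ n) (hg.toLp g)

lemma eqLocus_koopman (hΦ : MeasurePreserving Φ ρ ρ) :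
    (koopman hΦ).eqLocus (1 : Lp ℝ 2 ρ →L[ℝ] Lp ℝ 2 ρ) = lpMeas ℝ ℝ (invariants Φ) 2 ρ := by
  ext f
  have hcoe : koopman hΦ f =ᵐ[ρ] f ∘ Φ := Lp.coeFn_compMeasurePreserving f hΦ
  rw [mem_lpMeas_iff_aestronglyMeasurable]
  constructor
  · intro hf
    have hfix : koopman hΦ f = f := hf
    rw [hfix] at hcoe
    obtain ⟨g, hg, hfg⟩ := Lp.aestronglyMeasurable f
    have hginv : g ∘ Φ =ᵐ[ρ] g :=
      (hΦ.quasiMeasurePreserving.ae_eq_comp hfg).symm.trans (hcoe.symm.trans hfg)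
    exact (aestronglyMeasurable_invariants_of_comp_ae_eq hΦ.quasiMeasurePreserving
      hg.measurable hginv).congr hfg.symm
  · rintro ⟨g, hg, hfg⟩
    refine Lp.ext (hcoe.trans ?_)
    calc f ∘ Φ =ᵐ[ρ] g ∘ Φ := hΦ.quasiMeasurePreserving.ae_eq_comp hfg
      _ = g := MeasurableSpace.comp_eq_of_measurable_invariants hg.measurable
      _ =ᵐ[ρ] f := hfg.symm

lemma tendsto_birkhoffAverage_koopman [IsFiniteMeasure ρ] (hΦ : MeasurePreserving Φ ρ ρ)
    {g : α → ℝ} (hg : MemLp g 2 ρ) :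
    Tendsto (birkhoffAverage ℝ (koopman hΦ) _root_.id · (hg.toLp g)) atTop
      (𝓝 ((hg.condExp (m := invariants Φ) one_le_two).toLp _)) := by
  have : Fact (invariants Φ ≤ ‹MeasurableSpace α›) := ⟨invariants_le Φ⟩
  have hproj : ((lpMeas ℝ ℝ (invariants Φ) 2 ρ).orthogonalProjectionOnto (hg.toLp g) : Lp ℝ 2 ρ)
      = (hg.condExp (m := invariants Φ) one_le_two).toLp _ :=
    Lp.ext ((hg.condExpL2_ae_eq_condExp (𝕜 := ℝ) (invariants_le Φ)).trans
      (MemLp.coeFn_toLp _).symm)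
  have htendsto := (koopman hΦ).tendsto_birkhoffAverage_orthogonalProjection
    (LinearIsometry.norm_toContinuousLinearMap_le _) (hg.toLp g)
  have hcongr : ∀ {K L : Submodule ℝ (Lp ℝ 2 ρ)} [K.HasOrthogonalProjection]
      [L.HasOrthogonalProjection], K = L → ∀ x,
      (K.orthogonalProjectionOnto x : Lp ℝ 2 ρ) = L.orthogonalProjectionOnto x := by
    rintro K _ _ _ rfl x
    rfl
  rwa [hcongr (eqLocus_koopman hΦ), hproj] at htendsto

lemma tendsto_average_integral_mul_comp_iterate [IsFiniteMeasure ρ]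
    (hΦ : MeasurePreserving Φ ρ ρ) {f g : α → ℝ} (hf : MemLp f 2 ρ) (hg : MemLp g 2 ρ) :
    Tendsto (fun N : ℕ ↦ (N : ℝ)⁻¹ * ∑ n ∈ range N, ∫ x, f x * g (Φ^[n] x) ∂ρ) atTop
      (𝓝 (∫ x, f x * (ρ[g | invariants Φ]) x ∂ρ)) := by
  have hinner : ∀ {h : α → ℝ} (hh : MemLp h 2 ρ),
      ⟪hf.toLp f, hh.toLp h⟫_ℝ = ∫ x, f x * h x ∂ρ := by
    intro h hh
    refine integral_congr_ae ?_
    filter_upwards [hf.coeFn_toLp, hh.coeFn_toLp] with x hfx hhx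
    rw [hfx, hhx, RCLike.inner_apply, conj_trivial, mul_comm]
  have htendsto := (tendsto_birkhoffAverage_koopman hΦ hg).inner (𝕜 := ℝ)
    (tendsto_const_nhds (x := hf.toLp f))
  simp_rw [real_inner_comm, hinner, birkhoffAverage, birkhoffSum, inner_smul_right, inner_sum,
    _root_.id, koopman_iterate_toLp hΦ hg, hinner] at htendsto
  exact htendsto

lemma integral_condExp_mul_condExp_congr [IsFiniteMeasure ρ] (hΦ : MeasurePreserving Φ ρ ρ)
    {f g f' g' : α → ℝ} (hf : MemLp f 2 ρ) (hg : MemLp g 2 ρ) (hf' : MemLp f' 2 ρ)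
    (hg' : MemLp g' 2 ρ)
    (h : ∀ n, ∫ x, f x * g (Φ^[n] x) ∂ρ = ∫ x, f' x * g' (Φ^[n] x) ∂ρ) :
    ∫ x, (ρ[f | invariants Φ]) x * (ρ[g | invariants Φ]) x ∂ρ
      = ∫ x, (ρ[f' | invariants Φ]) x * (ρ[g' | invariants Φ]) x ∂ρ := by
  rw [← integral_condExp_mul_condExp (invariants_le Φ) hf hg,
    ← integral_condExp_mul_condExp (invariants_le Φ) hf' hg']
  have hlim := tendsto_average_integral_mul_comp_iterate hΦ hf hg
  simp_rw [h] at hlim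
  exact tendsto_nhds_unique hlim (tendsto_average_integral_mul_comp_iterate hΦ hf' hg')

lemma condExp_invariants_comp [IsFiniteMeasure ρ] [IsFiniteMeasure ν] {Ψ : α → α} {π : α → β}
    (hΨ : MeasurePreserving Ψ ρ ρ) (hR : MeasurePreserving R ν ν) (hπ : MeasurePreserving π ρ ν)
    (hsemi : Function.Semiconj π Ψ R) {φ : β → ℝ} (hφ : MemLp φ 2 ν) :
    ρ[φ ∘ π | invariants Ψ] =ᵐ[ρ] ν[φ | invariants R] ∘ π := by
  let U := Lp.compMeasurePreservingₗᵢ (E := ℝ) (p := 2) ℝ π hπ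
  have hU : Function.Semiconj U (koopman hR) (koopman hΨ) := by
    intro f
    change Lp.compMeasurePreserving π hπ (Lp.compMeasurePreserving R hR f) =
      Lp.compMeasurePreserving Ψ hΨ (Lp.compMeasurePreserving π hπ f)
    simp_rw [← Lp.compMeasurePreserving_comp_apply, hsemi.comp_eq]
  have havg (N : ℕ) : U (birkhoffAverage ℝ (koopman hR) _root_.id N (hφ.toLp φ)) =
      birkhoffAverage ℝ (koopman hΨ) _root_.id N (U (hφ.toLp φ)) := by
    simp only [birkhoffAverage, birkhoffSum, _root_.id, map_smul, map_sum,
      (hU.iterate_right _).eq]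
  have hlim := (U.continuous.tendsto _).comp (tendsto_birkhoffAverage_koopman hR hφ)
  have hlim' := tendsto_birkhoffAverage_koopman hΨ (hφ.comp_measurePreserving hπ)
  have heq := tendsto_nhds_unique hlim' (hlim.congr havg)
  exact (MemLp.toLp_eq_toLp_iff _ ((hφ.condExp one_le_two).comp_measurePreserving hπ)).1 heq

lemma integral_comp_mul_eq_integral_condExp_comp_mul [IsFiniteMeasure ρ] [IsFiniteMeasure ν]
    {Ψ : α → α} {π : α → β} (hΨ : MeasurePreserving Ψ ρ ρ) (hR : MeasurePreserving R ν ν)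
    (hπ : MeasurePreserving π ρ ν) (hsemi : Function.Semiconj π Ψ R) {φ : β → ℝ}
    (hφ : MemLp φ 2 ν) {J : α → ℝ} (hJ : Measurable[invariants Ψ] J) (hJ₂ : MemLp J 2 ρ) :
    ∫ p, φ (π p) * J p ∂ρ = ∫ p, (ν[φ | invariants R]) (π p) * J p ∂ρ := by
  have hφπ : MemLp (φ ∘ π) 2 ρ := hφ.comp_measurePreserving hπ
  calc ∫ p, φ (π p) * J p ∂ρ
      = ∫ p, (ρ[φ ∘ π | invariants Ψ]) p * J p ∂ρ :=
        (integral_condExp_mul (invariants_le Ψ) (hφπ.integrable one_le_two)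
          hJ.stronglyMeasurable.aestronglyMeasurable (hφπ.integrable_mul hJ₂)).symm
    _ = ∫ p, (ν[φ | invariants R]) (π p) * J p ∂ρ :=
        integral_congr_ae ((condExp_invariants_comp hΨ hR hπ hsemi hφ).mul EventuallyEq.rfl)

end MeanErgodic

/-! ### Maps acting trivially on invariant sets -/

/-- `g` preserves `ν` and maps every `R`-invariant set to itself up to a null set, i.e. `g` acts
trivially on the factor of `R`-invariant sets. -/
structure FixesInvariants {Y : Type*} [MeasurableSpace Y] (ν : Measure Y) (R g : Y → Y) :
    Prop where
  measurePreserving : MeasurePreserving g ν ν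
  preimage_ae_eq : ∀ s, MeasurableSet[invariants R] s → g ⁻¹' s =ᵐ[ν] s

namespace FixesInvariants

variable {Y : Type*} [MeasurableSpace Y] {ν : Measure Y} {R Q g : Y → Y}

protected lemma id : FixesInvariants ν R id := ⟨.id ν, fun _ _ ↦ EventuallyEq.rfl⟩

protected lemma self (hR : MeasurePreserving R ν ν) : FixesInvariants ν R R :=
  ⟨hR, fun _ hs ↦ hs.2.eventuallyEq⟩

protected lemma iterate (hR : MeasurePreserving R ν ν) (n : ℕ) : FixesInvariants ν R R^[n] :=
  ⟨hR.iterate n, fun s hs ↦ (MeasurableSpace.le_invariants_iterate R n s hs).2.eventuallyEq⟩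

protected lemma comp (hg : FixesInvariants ν R g) (hQ : FixesInvariants ν R Q) :
    FixesInvariants ν R (g ∘ Q) :=
  ⟨hg.measurePreserving.comp hQ.measurePreserving, fun s hs ↦
    (hQ.measurePreserving.quasiMeasurePreserving.preimage_ae_eq (hg.preimage_ae_eq s hs)).trans
      (hQ.preimage_ae_eq s hs)⟩

lemma condExp_comp [IsFiniteMeasure ν] (hg : FixesInvariants ν R g) {F : Y → ℝ}
    (hF : Integrable F ν) :
    ν[F ∘ g | invariants R] =ᵐ[ν] ν[F | invariants R] := by
  refine (ae_eq_condExp_of_forall_setIntegral_eq (invariants_le R)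
    (hg.measurePreserving.integrable_comp_of_integrable hF)
    (fun _ _ _ ↦ integrable_condExp.integrableOn) (fun s hs _ ↦ ?_)
    stronglyMeasurable_condExp.aestronglyMeasurable).symm
  calc ∫ x in s, (ν[F | invariants R]) x ∂ν
      = ∫ x in s, F x ∂ν := setIntegral_condExp (invariants_le R) hF hs
    _ = ∫ x in g ⁻¹' s, F (g x) ∂ν := by
        have hF_map : AEStronglyMeasurable F (ν.map g) := by
          rw [hg.measurePreserving.map_eq]
          exact hF.1
        rw [← setIntegral_map hs.1 hF_map hg.measurePreserving.aemeasurable,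
          hg.measurePreserving.map_eq]
    _ = ∫ x in s, (F ∘ g) x ∂ν := setIntegral_congr_set (hg.preimage_ae_eq s hs)

lemma exists_measurableSet_invariants_ae_eq (hQ : FixesInvariants ν R Q) {s : Set Y}
    (hs : MeasurableSet[invariants R] s) :
    ∃ t, MeasurableSet[invariants Q] t ∧ t =ᵐ[ν] s := by
  obtain ⟨t, ht, hts, hinv⟩ := hQ.measurePreserving.quasiMeasurePreserving
    |>.exists_preimage_eq_of_preimage_ae hs.1.nullMeasurableSet (hQ.preimage_ae_eq s hs)
  exact ⟨t, ⟨ht, hinv⟩, hts⟩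

lemma condExp_ae_eq [IsFiniteMeasure ν] (hQ : FixesInvariants ν R Q)
    (hR : FixesInvariants ν Q R) {F : Y → ℝ} (hF : MemLp F 2 ν) :
    ν[F | invariants R] =ᵐ[ν] ν[F | invariants Q] :=
  condExp_ae_eq_of_condExp_condExp (invariants_le R) (invariants_le Q) hF
    (condExp_condExp_of_forall_exists_ae_eq (invariants_le R) (invariants_le Q)
      (fun _ ↦ hR.exists_measurableSet_invariants_ae_eq) (hF.integrable one_le_two))
    (condExp_condExp_of_forall_exists_ae_eq (invariants_le Q) (invariants_le R)
      (fun _ ↦ hQ.exists_measurableSet_invariants_ae_eq) (hF.integrable one_le_two))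

end FixesInvariants

/-! ### Relatively independent squares -/

section RelIndepSquare

variable {Y : Type*} [MeasurableSpace Y] {ν : Measure Y} {R Q a b : Y → Y}
  {ρ σ : Measure (Y × Y)}

/-- `ρ` is the relatively independent square `ν ×_𝓘 ν` of `ν` over the σ-algebra `𝓘` of
`R`-invariant sets. Being finite, `ρ` is determined by its values on rectangles. -/
structure IsRelIndepSquare (ν : Measure Y) (R : Y → Y) (ρ : Measure (Y × Y)) : Prop where
  isFiniteMeasure : IsFiniteMeasure ρ
  real_prod : ∀ A B, MeasurableSet A → MeasurableSet B →
    ρ.real (A ×ˢ B) = ∫ x, (ν⟦A | invariants R⟧) x * (ν⟦B | invariants R⟧) x ∂ν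

lemma measurePreserving_of_forall_prod {α β : Type*} [MeasurableSpace α] [MeasurableSpace β]
    {ρ : Measure (α × β)} [IsFiniteMeasure ρ] {Φ : α × β → α × β} (hΦ : Measurable Φ)
    (h : ∀ A B, MeasurableSet A → MeasurableSet B →
      ρ.real (Φ ⁻¹' (A ×ˢ B)) = ρ.real (A ×ˢ B)) :
    MeasurePreserving Φ ρ ρ := by
  refine ⟨hΦ, Measure.ext_prod fun {A B} hA hB ↦ ?_⟩
  rw [Measure.map_apply hΦ (hA.prod hB), ← measureReal_eq_measureReal_iff]
  exact h A B hA hB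

lemma isProbabilityMeasure_of_forall_real_prod [IsProbabilityMeasure ν]
    (h : ∀ A B, MeasurableSet A → MeasurableSet B →
      ρ.real (A ×ˢ B) = ∫ x, (ν⟦A | invariants R⟧) x * (ν⟦B | invariants R⟧) x ∂ν) :
    IsProbabilityMeasure ρ := by
  rw [isProbabilityMeasure_iff_real, ← Set.univ_prod_univ, h _ _ .univ .univ]
  simp only [Set.indicator_univ, condExp_const (invariants_le R), mul_one, integral_const,
    probReal_univ, smul_eq_mul]

namespace IsRelIndepSquare

lemma isProbabilityMeasure [IsProbabilityMeasure ν] (h : IsRelIndepSquare ν R ρ) :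
    IsProbabilityMeasure ρ :=
  isProbabilityMeasure_of_forall_real_prod h.real_prod

lemma measurePreserving_fst [IsFiniteMeasure ν] (h : IsRelIndepSquare ν R ρ) :
    MeasurePreserving Prod.fst ρ ν := by
  have := h.isFiniteMeasure
  refine ⟨measurable_fst, Measure.ext fun A hA ↦ ?_⟩
  rw [Measure.map_apply measurable_fst hA, ← measureReal_eq_measureReal_iff, ← Set.prod_univ,
    h.real_prod A Set.univ hA .univ]
  simp only [Set.indicator_univ, condExp_const (invariants_le R), mul_one,
    integral_condExp (invariants_le R), integral_indicator_const _ hA, smul_eq_mul]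

lemma measurePreserving_swap (h : IsRelIndepSquare ν R ρ) :
    MeasurePreserving Prod.swap ρ ρ := by
  have := h.isFiniteMeasure
  refine measurePreserving_of_forall_prod measurable_swap fun A B hA hB ↦ ?_
  rw [Set.preimage_swap_prod, h.real_prod B A hB hA, h.real_prod A B hA hB]
  simp_rw [mul_comm]

lemma measurePreserving_snd [IsFiniteMeasure ν] (h : IsRelIndepSquare ν R ρ) :
    MeasurePreserving Prod.snd ρ ν :=
  h.measurePreserving_fst.comp h.measurePreserving_swap

lemma measurePreserving_prodMap [IsFiniteMeasure ν]
    (h : IsRelIndepSquare ν R ρ) (ha : FixesInvariants ν R a) (hb : FixesInvariants ν R b) :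
    MeasurePreserving (Prod.map a b) ρ ρ := by
  have := h.isFiniteMeasure
  have hma := ha.measurePreserving.measurable
  have hmb := hb.measurePreserving.measurable
  have hcond {g : Y → Y} (hg : FixesInvariants ν R g) {A : Set Y} (hA : MeasurableSet A) :
      ν⟦g ⁻¹' A | invariants R⟧ =ᵐ[ν] ν⟦A | invariants R⟧ :=
    hg.condExp_comp (F := A.indicator fun _ ↦ 1) ((integrable_const 1).indicator hA)
  refine measurePreserving_of_forall_prod (hma.prodMap hmb) fun A B hA hB ↦ ?_
  rw [Set.preimage_prod_map_prod, h.real_prod _ _ (hma hA) (hmb hB), h.real_prod _ _ hA hB]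
  exact integral_congr_ae ((hcond ha hA).mul (hcond hb hB))

lemma preimage_fst_ae_eq_preimage_snd [IsFiniteMeasure ν]
    (h : IsRelIndepSquare ν R ρ) {A : Set Y} (hA : MeasurableSet[invariants R] A) :
    (Prod.fst ⁻¹' A : Set (Y × Y)) =ᵐ[ρ] Prod.snd ⁻¹' A := by
  have := h.isFiniteMeasure
  have hnull : ∀ B, MeasurableSet[invariants R] B → ρ (B ×ˢ Bᶜ) = 0 := by
    intro B hB
    have hcond : ∀ C, MeasurableSet[invariants R] C →
        ν⟦C | invariants R⟧ = C.indicator fun _ ↦ 1 := fun C hC ↦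
      condExp_of_stronglyMeasurable (invariants_le R) (stronglyMeasurable_const.indicator hC)
        ((integrable_const 1).indicator hC.1)
    rw [← measureReal_eq_zero_iff, h.real_prod _ _ hB.1 hB.1.compl, hcond B hB, hcond _ hB.compl]
    refine integral_eq_zero_of_ae (ae_of_all _ fun x ↦ ?_)
    by_cases hx : x ∈ B <;> simp [hx]
  refine ae_eq_set.2 ⟨hnull A hA, ?_⟩
  convert hnull Aᶜ hA.compl using 2
  ext p
  simp [and_comm]

lemma comp_fst_ae_eq_comp_snd [IsFiniteMeasure ν]
    (h : IsRelIndepSquare ν R ρ) {c : Y → ℝ} (hc : Measurable[invariants R] c) :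
    c ∘ Prod.fst =ᵐ[ρ] c ∘ Prod.snd :=
  comp_ae_eq_comp_of_preimage_ae_eq (fun _ hs ↦ h.preimage_fst_ae_eq_preimage_snd hs) hc

lemma eq_of_fixesInvariants [IsFiniteMeasure ν]
    (hρ : IsRelIndepSquare ν R ρ) (hσ : IsRelIndepSquare ν Q σ) (hQ : FixesInvariants ν R Q)
    (hR : FixesInvariants ν Q R) : ρ = σ := by
  have := hρ.isFiniteMeasure
  have := hσ.isFiniteMeasure
  have hcond {A : Set Y} (hA : MeasurableSet A) :
      ν⟦A | invariants R⟧ =ᵐ[ν] ν⟦A | invariants Q⟧ :=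
    hQ.condExp_ae_eq hR ((memLp_const 1).indicator hA)
  refine Measure.ext_prod fun {A B} hA hB ↦ ?_
  rw [← measureReal_eq_measureReal_iff, hρ.real_prod A B hA hB, hσ.real_prod A B hA hB]
  exact integral_congr_ae ((hcond hA).mul (hcond hB))

end IsRelIndepSquare

end RelIndepSquare

lemma FixesInvariants.integral_comp_mul {α β : Type*} [MeasurableSpace α] [MeasurableSpace β]
    {ρ : Measure α} {ν : Measure β} [IsFiniteMeasure ρ] [IsFiniteMeasure ν] {Ψ : α → α}
    {R Q : β → β} {π : α → β} (hQ : FixesInvariants ν R Q) (hΨ : MeasurePreserving Ψ ρ ρ)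
    (hR : MeasurePreserving R ν ν) (hπ : MeasurePreserving π ρ ν)
    (hsemi : Function.Semiconj π Ψ R) {φ : β → ℝ} (hφ : MemLp φ 2 ν) {J : α → ℝ}
    (hJ : Measurable[invariants Ψ] J) (hJ₂ : MemLp J 2 ρ) :
    ∫ p, φ (Q (π p)) * J p ∂ρ = ∫ p, φ (π p) * J p ∂ρ := by
  have hφQ : MemLp (φ ∘ Q) 2 ν := hφ.comp_measurePreserving hQ.measurePreserving
  have hcond : ν[φ ∘ Q | invariants R] ∘ π =ᵐ[ρ] ν[φ | invariants R] ∘ π :=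
    hπ.quasiMeasurePreserving.ae_eq_comp (hQ.condExp_comp (hφ.integrable one_le_two))
  calc ∫ p, φ (Q (π p)) * J p ∂ρ
      = ∫ p, (ν[φ ∘ Q | invariants R]) (π p) * J p ∂ρ :=
        integral_comp_mul_eq_integral_condExp_comp_mul hΨ hR hπ hsemi hφQ hJ hJ₂
    _ = ∫ p, (ν[φ | invariants R]) (π p) * J p ∂ρ :=
        integral_congr_ae (hcond.mul EventuallyEq.rfl)
    _ = ∫ p, φ (π p) * J p ∂ρ :=
        (integral_comp_mul_eq_integral_condExp_comp_mul hΨ hR hπ hsemi hφ hJ hJ₂).symm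

lemma preimage_ae_eq_of_forall_integral_prod {α β : Type*} [MeasurableSpace α]
    [MeasurableSpace β] {ρ : Measure (α × β)} [IsFiniteMeasure ρ] {Φ : α × β → α × β}
    (hΦ : MeasurePreserving Φ ρ ρ) {s : Set (α × β)} (hs : MeasurableSet s)
    (h : ∀ A C, MeasurableSet A → MeasurableSet C →
      ∫ p, A.indicator 1 (Φ p).1 * (C.indicator 1 (Φ p).2 * s.indicator (1 : α × β → ℝ) p) ∂ρ
        = ∫ p, A.indicator 1 p.1 * (C.indicator 1 p.2 * s.indicator (1 : α × β → ℝ) p) ∂ρ) :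
    Φ ⁻¹' s =ᵐ[ρ] s := by
  have hreal {Θ : α × β → α × β} (hΘ : Measurable Θ) {A : Set α} {C : Set β}
      (hA : MeasurableSet A) (hC : MeasurableSet C) :
      ∫ p, A.indicator 1 (Θ p).1 * (C.indicator 1 (Θ p).2 * s.indicator (1 : α × β → ℝ) p) ∂ρ
        = ρ.real (Θ ⁻¹' (A ×ˢ C) ∩ s) := by
    rw [← integral_indicator_one ((hΘ (hA.prod hC)).inter hs)]
    refine integral_congr_ae (ae_of_all _ fun p ↦ ?_)
    by_cases h₁ : (Θ p).1 ∈ A <;> by_cases h₂ : (Θ p).2 ∈ C <;> by_cases h₃ : p ∈ s <;>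
      simp [h₁, h₂, h₃]
  have hmap : (ρ.restrict s).map Φ = ρ.restrict s := by
    refine Measure.ext_prod fun {A C} hA hC ↦ ?_
    rw [Measure.map_apply hΦ.measurable (hA.prod hC),
      Measure.restrict_apply (hΦ.measurable (hA.prod hC)), Measure.restrict_apply (hA.prod hC),
      ← measureReal_eq_measureReal_iff, ← hreal hΦ.measurable hA hC, h A C hA hC]
    exact hreal measurable_id hA hC
  have hinter : ρ (Φ ⁻¹' s ∩ s) = ρ s := by
    simpa only [Measure.map_apply hΦ.measurable hs, Measure.restrict_apply (hΦ.measurable hs),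
      Measure.restrict_apply_self] using congrArg (fun σ : Measure (α × β) ↦ σ s) hmap
  have hinter_ae : (Φ ⁻¹' s ∩ s : Set (α × β)) =ᵐ[ρ] s :=
    ae_eq_of_subset_of_measure_ge Set.inter_subset_right hinter.ge
      ((hΦ.measurable hs).inter hs).nullMeasurableSet (measure_ne_top ρ s)
  have hinter_ae' : (Φ ⁻¹' s ∩ s : Set (α × β)) =ᵐ[ρ] Φ ⁻¹' s :=
    ae_eq_of_subset_of_measure_ge Set.inter_subset_left
      ((hΦ.measure_preimage hs.nullMeasurableSet).trans hinter.symm).le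
      ((hΦ.measurable hs).inter hs).nullMeasurableSet (measure_ne_top ρ _)
  exact hinter_ae'.symm.trans hinter_ae

/-! ### Invariant kernels -/

section Kernel

variable {Y : Type*} [MeasurableSpace Y] {R : Y → Y} {L : Y × Y → ℝ}

lemma measurable_invariants_comp_prodMap {a b : Y → Y} (ha : Measurable a) (hb : Measurable b)
    (haR : Function.Commute a R) (hbR : Function.Commute b R)
    (hL : Measurable[invariants (Prod.map R R)] L) :
    Measurable[invariants (Prod.map R R)] (L ∘ Prod.map a b) :=
  hL.comp (MeasurableSpace.measurable_invariants_of_semiconj (ha.prodMap hb)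
    fun p ↦ Prod.ext (haR p.1) (hbR p.2))

lemma apply_iterate_of_measurable_invariants (hL : Measurable[invariants (Prod.map R R)] L)
    (n : ℕ) (x y : Y) : L (R^[n] x, R^[n] y) = L (x, y) := by
  have hinv := MeasurableSpace.comp_eq_of_measurable_invariants
    (hL.mono (MeasurableSpace.le_invariants_iterate _ n) le_rfl)
  rw [Prod.map_iterate] at hinv
  exact congrFun hinv (x, y)

end Kernel

namespace IsRelIndepSquare

variable {Y : Type*} [MeasurableSpace Y] {ν : Measure Y} {R Q : Y → Y} {ρ : Measure (Y × Y)}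
  [IsFiniteMeasure ν] {L : Y × Y → ℝ} {θ : Y → ℝ}

lemma fixesInvariants_prodMap_id (h : IsRelIndepSquare ν R ρ) (hR : MeasurePreserving R ν ν)
    (hQ : FixesInvariants ν R Q) :
    FixesInvariants ρ (Prod.map R id) (Prod.map Q id) := by
  have := h.isFiniteMeasure
  refine ⟨h.measurePreserving_prodMap hQ .id, fun s hs ↦ ?_⟩
  refine preimage_ae_eq_of_forall_integral_prod (h.measurePreserving_prodMap hQ .id) hs.1
    fun A C hA hC ↦ ?_
  have hC_inv : MeasurableSet[invariants (Prod.map R id)] (Prod.snd ⁻¹' C : Set (Y × Y)) :=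
    ⟨measurable_snd hC, rfl⟩
  have hJ : Measurable[invariants (Prod.map R id)]
      fun p : Y × Y ↦ C.indicator 1 p.2 * s.indicator (1 : Y × Y → ℝ) p :=
    (measurable_const.indicator hC_inv).mul (measurable_const.indicator hs)
  have hJ₂ : MemLp (fun p : Y × Y ↦ C.indicator 1 p.2 * s.indicator (1 : Y × Y → ℝ) p) 2 ρ :=
    MemLp.mul (p := ∞) (q := 2) ((memLp_const 1).indicator hs.1)
      ((memLp_const 1).indicator hC_inv.1)
  exact hQ.integral_comp_mul (h.measurePreserving_prodMap (.self hR) .id) hR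
    h.measurePreserving_fst (fun _ ↦ rfl) ((memLp_const 1).indicator hA) hJ hJ₂

lemma memLp_two_kernel_mul_kernel (h : IsRelIndepSquare ν R ρ) (hL : MemLp L ∞ ρ)
    {a b : Y → Y} (ha : FixesInvariants ν R a) (hb : FixesInvariants ν R b) :
    MemLp (fun p : Y × Y ↦ L (p.1, a p.2) * L (b p.1, p.2)) 2 ρ := by
  have := h.isFiniteMeasure
  have hLa : MemLp (L ∘ Prod.map id a) ∞ ρ :=
    hL.comp_measurePreserving (h.measurePreserving_prodMap .id ha)
  have hLb : MemLp (L ∘ Prod.map b id) ∞ ρ :=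
    hL.comp_measurePreserving (h.measurePreserving_prodMap hb .id)
  exact (MemLp.mul (p := ∞) (r := ∞) hLb hLa).mono_exponent le_top

lemma integral_fst_mul_kernel_mul_kernel_eq_condExp (h : IsRelIndepSquare ν R ρ)
    (hR : MeasurePreserving R ν ν) (hL : Measurable[invariants (Prod.map R R)] L)
    (hL_top : MemLp L ∞ ρ) {φ : Y → ℝ} (hφ : MemLp φ 2 ν) {a b : Y → Y}
    (ha : FixesInvariants ν R a) (hb : FixesInvariants ν R b) (haR : Function.Commute a R)
    (hbR : Function.Commute b R) :
    ∫ p, φ p.1 * (L (p.1, a p.2) * L (b p.1, p.2)) ∂ρ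
      = ∫ p, (ν[φ | invariants R]) p.1 * (L (p.1, a p.2) * L (b p.1, p.2)) ∂ρ := by
  have := h.isFiniteMeasure
  have hLa := measurable_invariants_comp_prodMap measurable_id ha.measurePreserving.measurable
    .id_left haR hL
  have hLb := measurable_invariants_comp_prodMap hb.measurePreserving.measurable measurable_id
    hbR .id_left hL
  exact integral_comp_mul_eq_integral_condExp_comp_mul
    (h.measurePreserving_prodMap (.self hR) (.self hR)) hR h.measurePreserving_fst (fun _ ↦ rfl)
    hφ (hLa.mul hLb) (h.memLp_two_kernel_mul_kernel hL_top ha hb)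

lemma integral_fst_mul_kernel_comp_snd_mul_kernel_of_invariant
    (h : IsRelIndepSquare ν R ρ) (hR : MeasurePreserving R ν ν) (hQ : Measurable Q)
    (hQR : Function.Commute Q R)
    (hL : Measurable[invariants (Prod.map R R)] L) {ε : ℝ} (hε : ε * ε = 1)
    (hL_swap : ∀ p, L p.swap = ε * L p) {c : Y → ℝ} (hc : Measurable[invariants R] c) (n : ℕ) :
    ∫ p, c p.1 * (L (p.1, Q p.2) * L (R^[n] p.1, p.2)) ∂ρ
      = ∫ p, c p.1 * (L p * L (Q (R^[n] p.1), p.2)) ∂ρ := by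
  have hc_iter : c ∘ R^[n] = c := MeasurableSpace.comp_eq_of_measurable_invariants
    (hc.mono (MeasurableSpace.le_invariants_iterate R n) le_rfl)
  have hL_mul_swap : ∀ x y u v, L (y, x) * L (v, u) = L (x, y) * L (u, v) := by
    intro x y u v
    rw [← Prod.swap_prod_mk, ← Prod.swap_prod_mk (a := u), hL_swap, hL_swap]
    linear_combination L (x, y) * L (u, v) * hε
  have hRn := hR.measurable.iterate n
  have hcm : Measurable c := hc.mono (invariants_le R) le_rfl
  have hLm : Measurable L := hL.mono (invariants_le _) le_rfl
  symm
  -- `c p.1 = c p.2` almost everywhere, so the coordinates can be swapped; applying `R^[n]` to the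
  -- first one then moves `Q` from the first to the second argument of `L`.
  calc ∫ p, c p.1 * (L p * L (Q (R^[n] p.1), p.2)) ∂ρ
      = ∫ p, c p.2 * (L p.swap * L (Q (R^[n] p.2), p.1)) ∂ρ :=
        (integral_comp_of_measurePreserving h.measurePreserving_swap (by fun_prop)).symm
    _ = ∫ p, c p.1 * (L p * L (p.1, Q (R^[n] p.2))) ∂ρ := by
        refine integral_congr_ae ?_
        filter_upwards [h.comp_fst_ae_eq_comp_snd hc] with p hp
        simp only [Function.comp_apply] at hp
        rw [hp, ← hL_mul_swap]
        rfl
    _ = ∫ p, c (R^[n] p.1) * (L (R^[n] p.1, p.2) * L (R^[n] p.1, Q (R^[n] p.2))) ∂ρ :=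
        (integral_comp_of_measurePreserving
          (F := fun p ↦ c p.1 * (L p * L (p.1, Q (R^[n] p.2))))
          (h.measurePreserving_prodMap (.iterate hR n) .id) (by fun_prop)).symm
    _ = ∫ p, c p.1 * (L (p.1, Q p.2) * L (R^[n] p.1, p.2)) ∂ρ := by
        refine integral_congr_ae (ae_of_all _ fun p ↦ ?_)
        simp only
        rw [(hQR.iterate_right n).eq, apply_iterate_of_measurable_invariants hL,
          ← Function.comp_apply (f := c), hc_iter, mul_comm (L (R^[n] p.1, p.2))]

lemma integral_fst_mul_kernel_comp_snd_mul_kernel (h : IsRelIndepSquare ν R ρ)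
    (hR : MeasurePreserving R ν ν) (hQ : FixesInvariants ν R Q) (hQR : Function.Commute Q R)
    (hL : Measurable[invariants (Prod.map R R)] L) (hL_top : MemLp L ∞ ρ) {ε : ℝ}
    (hε : ε * ε = 1) (hL_swap : ∀ p, L p.swap = ε * L p) {φ : Y → ℝ} (hφ : MemLp φ 2 ν) (n : ℕ) :
    ∫ p, φ p.1 * (L (p.1, Q p.2) * L (R^[n] p.1, p.2)) ∂ρ
      = ∫ p, φ p.1 * (L p * L (Q (R^[n] p.1), p.2)) ∂ρ := by
  have hRn : FixesInvariants ν R R^[n] := .iterate hR n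
  have hRnR : Function.Commute R^[n] R := .iterate_self R n
  calc ∫ p, φ p.1 * (L (p.1, Q p.2) * L (R^[n] p.1, p.2)) ∂ρ
      = ∫ p, (ν[φ | invariants R]) p.1 * (L (p.1, Q p.2) * L (R^[n] p.1, p.2)) ∂ρ :=
        h.integral_fst_mul_kernel_mul_kernel_eq_condExp hR hL hL_top hφ hQ hRn hQR hRnR
    _ = ∫ p, (ν[φ | invariants R]) p.1 * (L p * L (Q (R^[n] p.1), p.2)) ∂ρ :=
        h.integral_fst_mul_kernel_comp_snd_mul_kernel_of_invariant hR
          hQ.measurePreserving.measurable hQR hL hε hL_swap stronglyMeasurable_condExp.measurable n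
    _ = ∫ p, φ p.1 * (L p * L (Q (R^[n] p.1), p.2)) ∂ρ :=
        (h.integral_fst_mul_kernel_mul_kernel_eq_condExp hR hL hL_top hφ .id (hQ.comp hRn) .id_left
          (hQR.comp_left hRnR)).symm

lemma memLp_two_fst_mul_kernel (h : IsRelIndepSquare ν R ρ) (hL : MemLp L ∞ ρ)
    (hθ : MemLp θ ∞ ν) : MemLp (fun p ↦ θ p.1 * L p) 2 ρ := by
  have := h.isFiniteMeasure
  exact (MemLp.mul (p := ∞) (r := ∞) hL
    (hθ.comp_measurePreserving h.measurePreserving_fst)).mono_exponent le_top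

lemma integral_condExp_sq_kernel_comp_snd (h : IsRelIndepSquare ν R ρ)
    (hR : MeasurePreserving R ν ν) (hQ : FixesInvariants ν R Q) (hL_top : MemLp L ∞ ρ)
    (hθ : MemLp θ ∞ ν) :
    ∫ p, (ρ[fun p ↦ θ p.1 * L (p.1, Q p.2) | invariants (Prod.map R id)]) p
        * (ρ[fun p ↦ θ p.1 * L (p.1, Q p.2) | invariants (Prod.map R id)]) p ∂ρ
      = ∫ p, (ρ[fun p ↦ θ p.1 * L p | invariants (Prod.map R id)]) p
        * (ρ[fun p ↦ θ p.1 * L p | invariants (Prod.map R id)]) p ∂ρ := by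
  have := h.isFiniteMeasure
  have hΨ : MeasurePreserving (Prod.map R id) ρ ρ := h.measurePreserving_prodMap (.self hR) .id
  have hπ : MeasurePreserving (Prod.map id Q) ρ ρ := h.measurePreserving_prodMap .id hQ
  have hcond : ρ[fun p ↦ θ p.1 * L (p.1, Q p.2) | invariants (Prod.map R id)]
      =ᵐ[ρ] ρ[fun p ↦ θ p.1 * L p | invariants (Prod.map R id)] ∘ Prod.map id Q :=
    condExp_invariants_comp hΨ hΨ hπ (fun _ ↦ rfl) (h.memLp_two_fst_mul_kernel hL_top hθ)
  exact (integral_congr_ae (hcond.mul hcond)).trans (integral_comp_of_measurePreserving hπ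
    (integrable_condExp.aestronglyMeasurable.mul integrable_condExp.aestronglyMeasurable))

lemma integral_condExp_sq_comp_fst_mul_kernel (h : IsRelIndepSquare ν R ρ)
    (hR : MeasurePreserving R ν ν) (hQ : FixesInvariants ν R Q) (hQR : Function.Commute Q R)
    (hL : Measurable[invariants (Prod.map R R)] L) (hL_top : MemLp L ∞ ρ) (hθ : MemLp θ ∞ ν) :
    ∫ p, (ρ[fun p ↦ θ (Q p.1) * L p | invariants (Prod.map R id)]) p
        * (ρ[fun p ↦ θ (Q p.1) * L p | invariants (Prod.map R id)]) p ∂ρ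
      = ∫ p, (ρ[fun p ↦ θ p.1 * L p | invariants (Prod.map R id)]) p
        * (ρ[fun p ↦ θ p.1 * L p | invariants (Prod.map R id)]) p ∂ρ := by
  have := h.isFiniteMeasure
  have hG := h.memLp_two_fst_mul_kernel hL_top hθ
  have hG' := h.memLp_two_fst_mul_kernel hL_top (hθ.comp_measurePreserving hQ.measurePreserving)
  refine integral_condExp_mul_condExp_congr (h.measurePreserving_prodMap (.self hR) .id)
    hG' hG' hG hG fun n ↦ ?_
  have hRn : FixesInvariants ν R R^[n] := .iterate hR n
  have hφ : MemLp (fun x ↦ θ x * θ (R^[n] x)) 2 ν :=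
    (MemLp.mul (p := ∞) (r := ∞) (hθ.comp_measurePreserving hRn.measurePreserving)
      hθ).mono_exponent le_top
  have hL_iter := measurable_invariants_comp_prodMap hRn.measurePreserving.measurable
    measurable_id (.iterate_self R n) .id_left hL
  have hfix := hQ.integral_comp_mul (h.measurePreserving_prodMap (.self hR) (.self hR)) hR
    h.measurePreserving_fst (fun _ ↦ rfl) hφ (hL.mul hL_iter)
    (h.memLp_two_kernel_mul_kernel hL_top .id hRn)
  simp only [Prod.map_iterate, Function.iterate_id, Prod.map_fst, (hQR.iterate_right n).eq,
    mul_mul_mul_comm (θ _) (L _)] at hfix ⊢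
  exact hfix

lemma integral_condExp_mul_condExp_kernel (h : IsRelIndepSquare ν R ρ)
    (hR : MeasurePreserving R ν ν) (hQ : FixesInvariants ν R Q) (hQR : Function.Commute Q R)
    (hL : Measurable[invariants (Prod.map R R)] L) (hL_top : MemLp L ∞ ρ) {ε : ℝ}
    (hε : ε * ε = 1) (hL_swap : ∀ p, L p.swap = ε * L p) (hθ : MemLp θ ∞ ν) :
    ∫ p, (ρ[fun p ↦ θ p.1 * L (p.1, Q p.2) | invariants (Prod.map R id)]) p
        * (ρ[fun p ↦ θ (Q p.1) * L p | invariants (Prod.map R id)]) p ∂ρ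
      = ∫ p, (ρ[fun p ↦ θ p.1 * L p | invariants (Prod.map R id)]) p
        * (ρ[fun p ↦ θ p.1 * L p | invariants (Prod.map R id)]) p ∂ρ := by
  have := h.isFiniteMeasure
  have hG := h.memLp_two_fst_mul_kernel hL_top hθ
  have hQ_fst := h.fixesInvariants_prodMap_id hR hQ
  have hcond := hQ_fst.condExp_comp (hG.integrable one_le_two)
  refine Eq.trans ?_ (integral_congr_ae (EventuallyEq.rfl.mul hcond))
  refine integral_condExp_mul_condExp_congr (h.measurePreserving_prodMap (.self hR) .id)
    (hG.comp_measurePreserving (h.measurePreserving_prodMap .id hQ))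
    (h.memLp_two_fst_mul_kernel hL_top (hθ.comp_measurePreserving hQ.measurePreserving)) hG
    (hG.comp_measurePreserving hQ_fst.measurePreserving) fun n ↦ ?_
  have hφ : MemLp (fun x ↦ θ x * θ (Q (R^[n] x))) 2 ν :=
    (MemLp.mul (p := ∞) (r := ∞) (hθ.comp_measurePreserving
      (hQ.measurePreserving.comp (hR.iterate n))) hθ).mono_exponent le_top
  have htrace := h.integral_fst_mul_kernel_comp_snd_mul_kernel hR hQ hQR hL hL_top hε hL_swap hφ n
  simp only [Function.comp_apply, Prod.map_iterate, Function.iterate_id, Prod.map_fst,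
    mul_mul_mul_comm (θ _) (L _)]
  exact htrace

lemma condExp_kernel_comp_snd_ae_eq (h : IsRelIndepSquare ν R ρ) (hR : MeasurePreserving R ν ν)
    (hQ : FixesInvariants ν R Q) (hQR : Function.Commute Q R)
    (hL : Measurable[invariants (Prod.map R R)] L) (hL_top : MemLp L ∞ ρ) {ε : ℝ}
    (hε : ε * ε = 1) (hL_swap : ∀ p, L p.swap = ε * L p) (hθ : MemLp θ ∞ ν) :
    ρ[fun p ↦ θ p.1 * L (p.1, Q p.2) | invariants (Prod.map R id)]
      =ᵐ[ρ] ρ[fun p ↦ θ (Q p.1) * L p | invariants (Prod.map R id)] := by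
  have hG₁ : MemLp (fun p : Y × Y ↦ θ p.1 * L (p.1, Q p.2)) 2 ρ :=
    (h.memLp_two_fst_mul_kernel hL_top hθ).comp_measurePreserving
      (h.measurePreserving_prodMap .id hQ)
  have hG₂ : MemLp (fun p : Y × Y ↦ θ (Q p.1) * L p) 2 ρ :=
    h.memLp_two_fst_mul_kernel hL_top (hθ.comp_measurePreserving hQ.measurePreserving)
  exact ae_eq_of_integral_mul_eq (hG₁.condExp one_le_two) (hG₂.condExp one_le_two)
    (h.integral_condExp_sq_kernel_comp_snd hR hQ hL_top hθ)
    (h.integral_condExp_sq_comp_fst_mul_kernel hR hQ hQR hL hL_top hθ)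
    (h.integral_condExp_mul_condExp_kernel hR hQ hQR hL hL_top hε hL_swap hθ)

lemma integral_comp_fst_mul_kernel_mul_comp_snd_of_swap (h : IsRelIndepSquare ν R ρ)
    (hR : MeasurePreserving R ν ν) (hQ : FixesInvariants ν R Q) (hQR : Function.Commute Q R)
    (hL : Measurable[invariants (Prod.map R R)] L) (hL_top : MemLp L ∞ ρ) {ε : ℝ}
    (hε : ε * ε = 1) (hL_swap : ∀ p, L p.swap = ε * L p) (hθ : MemLp θ ∞ ν) {b : Y → ℝ}
    (hb : Measurable b) (hb_top : MemLp b ∞ ν) :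
    ∫ p, θ (Q p.1) * L p * b (Q p.2) ∂ρ = ∫ p, θ p.1 * L p * b p.2 ∂ρ := by
  have := h.isFiniteMeasure
  have hπ : MeasurePreserving (Prod.map id Q) ρ ρ := h.measurePreserving_prodMap .id hQ
  have hG := h.memLp_two_fst_mul_kernel hL_top hθ
  have hG₂ := h.memLp_two_fst_mul_kernel hL_top (hθ.comp_measurePreserving hQ.measurePreserving)
  have hbQ : Measurable[invariants (Prod.map R id)] fun p : Y × Y ↦ b (Q p.2) :=
    fun s hs ↦ ⟨(hb.comp (hQ.measurePreserving.measurable.comp measurable_snd)) hs, rfl⟩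
  have hb_snd := hb_top.comp_measurePreserving h.measurePreserving_snd
  have hbQ_top : MemLp (fun p : Y × Y ↦ b (Q p.2)) 2 ρ :=
    (hb_snd.comp_measurePreserving hπ).mono_exponent le_top
  have hpull {F : Y × Y → ℝ} (hF : MemLp F 2 ρ) :=
    integral_condExp_mul (invariants_le (Prod.map R id)) (hF.integrable one_le_two)
      hbQ.stronglyMeasurable.aestronglyMeasurable (hF.integrable_mul hbQ_top)
  calc ∫ p, θ (Q p.1) * L p * b (Q p.2) ∂ρ
      = ∫ p, (ρ[fun p ↦ θ (Q p.1) * L p | invariants (Prod.map R id)]) p * b (Q p.2) ∂ρ :=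
        (hpull hG₂).symm
    _ = ∫ p, (ρ[fun p ↦ θ p.1 * L (p.1, Q p.2) | invariants (Prod.map R id)]) p
          * b (Q p.2) ∂ρ :=
        integral_congr_ae ((h.condExp_kernel_comp_snd_ae_eq hR hQ hQR hL hL_top hε hL_swap
          hθ).symm.mul EventuallyEq.rfl)
    _ = ∫ p, θ p.1 * L (p.1, Q p.2) * b (Q p.2) ∂ρ := hpull (hG.comp_measurePreserving hπ)
    _ = ∫ p, θ p.1 * L p * b p.2 ∂ρ :=
        integral_comp_of_measurePreserving hπ (hG.1.mul hb_snd.1)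

lemma integrable_fst_mul_kernel_mul_snd (h : IsRelIndepSquare ν R ρ) {b : Y → ℝ}
    (hL : MemLp L ∞ ρ) (hθ : MemLp θ ∞ ν) (hb : MemLp b ∞ ν) :
    Integrable (fun p ↦ θ p.1 * L p * b p.2) ρ := by
  have := h.isFiniteMeasure
  exact MemLp.integrable_mul (p := 2) (q := 2) (h.memLp_two_fst_mul_kernel hL hθ)
    ((hb.comp_measurePreserving h.measurePreserving_snd).mono_exponent le_top)

lemma integral_fst_mul_kernel_mul_snd_eq_add (h : IsRelIndepSquare ν R ρ) {b : Y → ℝ}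
    (hL : MemLp L ∞ ρ) (hθ : MemLp θ ∞ ν) (hb : MemLp b ∞ ν) :
    2 * ∫ p, θ p.1 * L p * b p.2 ∂ρ
      = ∫ p, θ p.1 * (L + L ∘ Prod.swap) p * b p.2 ∂ρ
        + ∫ p, θ p.1 * (L - L ∘ Prod.swap) p * b p.2 ∂ρ := by
  have hL_swap : MemLp (L ∘ Prod.swap) ∞ ρ := hL.comp_measurePreserving h.measurePreserving_swap
  rw [← integral_const_mul, ← integral_add
    (h.integrable_fst_mul_kernel_mul_snd (hL.add hL_swap) hθ hb)
    (h.integrable_fst_mul_kernel_mul_snd (hL.sub hL_swap) hθ hb)]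
  congr with p
  simp only [Pi.add_apply, Pi.sub_apply]
  ring

lemma integral_comp_fst_mul_kernel_mul_comp_snd (h : IsRelIndepSquare ν R ρ)
    (hR : MeasurePreserving R ν ν) (hQ : FixesInvariants ν R Q) (hQR : Function.Commute Q R)
    (hL : Measurable[invariants (Prod.map R R)] L) (hL_top : MemLp L ∞ ρ) (hθ : MemLp θ ∞ ν)
    {b : Y → ℝ} (hb : Measurable b) (hb_top : MemLp b ∞ ν) :
    ∫ p, θ (Q p.1) * L p * b (Q p.2) ∂ρ = ∫ p, θ p.1 * L p * b p.2 ∂ρ := by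
  have hL_swap : Measurable[invariants (Prod.map R R)] (L ∘ Prod.swap) :=
    hL.comp (MeasurableSpace.measurable_invariants_of_semiconj measurable_swap fun _ ↦ rfl)
  have hL_swap_top : MemLp (L ∘ Prod.swap) ∞ ρ :=
    hL_top.comp_measurePreserving h.measurePreserving_swap
  have hsymm := h.integral_comp_fst_mul_kernel_mul_comp_snd_of_swap hR hQ hQR (hL.add hL_swap)
    (hL_top.add hL_swap_top) (ε := 1) (by norm_num)
    (fun p ↦ by simp only [Pi.add_apply, Function.comp_apply, Prod.swap_swap]; ring) hθ hb hb_top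
  have hanti := h.integral_comp_fst_mul_kernel_mul_comp_snd_of_swap hR hQ hQR (hL.sub hL_swap)
    (hL_top.sub hL_swap_top) (ε := -1) (by norm_num)
    (fun p ↦ by simp only [Pi.sub_apply, Function.comp_apply, Prod.swap_swap]; ring) hθ hb hb_top
  refine mul_left_cancel₀ (two_ne_zero (α := ℝ)) ?_
  calc 2 * ∫ p, θ (Q p.1) * L p * b (Q p.2) ∂ρ
      = ∫ p, θ (Q p.1) * (L + L ∘ Prod.swap) p * b (Q p.2) ∂ρ
        + ∫ p, θ (Q p.1) * (L - L ∘ Prod.swap) p * b (Q p.2) ∂ρ :=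
        h.integral_fst_mul_kernel_mul_snd_eq_add hL_top
          (hθ.comp_measurePreserving hQ.measurePreserving)
          (hb_top.comp_measurePreserving hQ.measurePreserving)
    _ = ∫ p, θ p.1 * (L + L ∘ Prod.swap) p * b p.2 ∂ρ
        + ∫ p, θ p.1 * (L - L ∘ Prod.swap) p * b p.2 ∂ρ := congrArg₂ (· + ·) hsymm hanti
    _ = 2 * ∫ p, θ p.1 * L p * b p.2 ∂ρ :=
        (h.integral_fst_mul_kernel_mul_snd_eq_add hL_top hθ hb_top).symm

lemma fixesInvariants_prodMap (h : IsRelIndepSquare ν R ρ)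
    (hR : MeasurePreserving R ν ν) (hQ : FixesInvariants ν R Q) (hQR : Function.Commute Q R) :
    FixesInvariants ρ (Prod.map R R) (Prod.map Q Q) := by
  have := h.isFiniteMeasure
  have hQQ := h.measurePreserving_prodMap hQ hQ
  refine ⟨hQQ, fun s hs ↦ preimage_ae_eq_of_forall_integral_prod hQQ hs.1 fun A C hA hC ↦ ?_⟩
  have htwist := h.integral_comp_fst_mul_kernel_mul_comp_snd hR hQ hQR (L := s.indicator 1)
    (measurable_const.indicator hs) ((memLp_const 1).indicator hs.1)
    ((memLp_const 1).indicator hA) (b := C.indicator 1) (measurable_const.indicator hC)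
    ((memLp_const 1).indicator hC)
  simp_rw [mul_assoc, mul_comm (s.indicator (1 : Y × Y → ℝ) _)] at htwist
  exact htwist

end IsRelIndepSquare

/-! ### Host–Kra box measures -/

lemma isRelIndepSquare_of_forall_integral {Y : Type*} [MeasurableSpace Y] {ν : Measure Y}
    [IsProbabilityMeasure ν] {R : Y → Y} {ρ : Measure (Y × Y)}
    (h : ∀ F F' : Y → ℝ, Measurable F → Measurable F' → (∃ C, ∀ x, |F x| ≤ C) →
      (∃ C, ∀ x, |F' x| ≤ C) → ∫ p, F p.1 * F' p.2 ∂ρ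
        = ∫ x, (ν[F | invSigma R]) x * (ν[F' | invSigma R]) x ∂ν) :
    IsRelIndepSquare ν R ρ := by
  have hbdd (C : Set Y) : ∃ c, ∀ x, |C.indicator (fun _ ↦ (1 : ℝ)) x| ≤ c :=
    ⟨1, fun x ↦ by by_cases hx : x ∈ C <;> simp [hx]⟩
  have hprod : ∀ A B, MeasurableSet A → MeasurableSet B → ρ.real (A ×ˢ B)
      = ∫ x, (ν⟦A | invariants R⟧) x * (ν⟦B | invariants R⟧) x ∂ν := by
    intro A B hA hB
    refine Eq.trans ?_ (h (A.indicator fun _ ↦ 1) (B.indicator fun _ ↦ 1)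
      (measurable_const.indicator hA) (measurable_const.indicator hB) (hbdd A) (hbdd B))
    rw [← integral_indicator_one (hA.prod hB)]
    exact integral_congr_ae (ae_of_all _ fun p ↦ Set.indicator_prod_one)
  have := isProbabilityMeasure_of_forall_real_prod hprod
  exact ⟨inferInstance, hprod⟩

lemma HKBox.commute_map {X : Type*} {T S : X → X} (h : Function.Commute T S) (k : ℕ) :
    Function.Commute (HKBox.map T k) (HKBox.map S k) := by
  induction k with
  | zero => exact h
  | succ k ih => exact fun p ↦ Prod.ext (ih p.1) (ih p.2)

section HostKra

variable {X : Type*} [MeasurableSpace X] {μ : Measure X} {T S : X → X}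

lemma fixesInvariants_of_preErgodic (hT : PreErgodic T μ) (hS : MeasurePreserving S μ μ) :
    FixesInvariants μ T S := by
  refine ⟨hS, fun s hs ↦ ?_⟩
  rcases hT.ae_empty_or_univ hs.1 hs.2 with h | h
  · exact (hS.quasiMeasurePreserving.preimage_ae_eq h).trans h.symm
  · exact (hS.quasiMeasurePreserving.preimage_ae_eq h).trans h.symm

namespace IsHKSeq

variable {ν νT νS : ∀ k, Measure (HKBox X k)}

lemma isProbabilityMeasure [IsProbabilityMeasure μ] (hν : IsHKSeq μ T ν) (k : ℕ) :
    IsProbabilityMeasure (ν k) := by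
  induction k with
  | zero => rwa [hν.1]
  | succ k ih => exact (isRelIndepSquare_of_forall_integral (hν.2 k)).isProbabilityMeasure

lemma isRelIndepSquare [IsProbabilityMeasure μ] (hν : IsHKSeq μ T ν) (k : ℕ) :
    IsRelIndepSquare (ν k) (HKBox.map T k) (ν (k + 1)) := by
  have := hν.isProbabilityMeasure k
  exact isRelIndepSquare_of_forall_integral (hν.2 k)

lemma measurePreserving_map [IsProbabilityMeasure μ] (hν : IsHKSeq μ T ν)
    (hT : MeasurePreserving T μ μ) (k : ℕ) :
    MeasurePreserving (HKBox.map T k) (ν k) (ν k) := by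
  have := hν.isProbabilityMeasure
  induction k with
  | zero => rwa [hν.1]
  | succ k ih =>
    exact (hν.isRelIndepSquare k).measurePreserving_prodMap (.self ih) (.self ih)

lemma fixesInvariants_map [IsProbabilityMeasure μ] (hν : IsHKSeq μ T ν) (hT : Ergodic T μ)
    (hS : MeasurePreserving S μ μ) (hcomm : Function.Commute S T) (k : ℕ) :
    FixesInvariants (ν k) (HKBox.map T k) (HKBox.map S k) := by
  have := hν.isProbabilityMeasure
  induction k with
  | zero =>
    rw [hν.1]
    exact fixesInvariants_of_preErgodic hT.toPreErgodic hS
  | succ k ih =>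
    exact (hν.isRelIndepSquare k).fixesInvariants_prodMap
      (hν.measurePreserving_map hT.toMeasurePreserving k) ih (HKBox.commute_map hcomm k)

lemma eq_of_commute [IsProbabilityMeasure μ] (hνT : IsHKSeq μ T νT) (hνS : IsHKSeq μ S νS)
    (hT : Ergodic T μ) (hS : Ergodic S μ) (hcomm : Function.Commute T S) (k : ℕ) :
    νT k = νS k := by
  have := hνT.isProbabilityMeasure
  have := hνS.isProbabilityMeasure
  induction k with
  | zero => rw [hνT.1, hνS.1]
  | succ k ih =>
    refine (hνT.isRelIndepSquare k).eq_of_fixesInvariants (Q := HKBox.map S k) ?_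
      (hνT.fixesInvariants_map hT hS.toMeasurePreserving hcomm.symm k) ?_
    · rw [ih]
      exact hνS.isRelIndepSquare k
    · rw [ih]
      exact hνS.fixesInvariants_map hS hT.toMeasurePreserving hcomm k

end IsHKSeq

lemma HKseminorm_eq_of_commute [IsProbabilityMeasure μ] {νT νS : ∀ k, Measure (HKBox X k)}
    (hνT : IsHKSeq μ T νT) (hνS : IsHKSeq μ S νS) (hT : Ergodic T μ) (hS : Ergodic S μ)
    (hcomm : Function.Commute T S) (k : ℕ) (f : X → ℝ) :
    HKseminorm νT k f = HKseminorm νS k f := by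
  rw [HKseminorm, HKseminorm, hνT.eq_of_commute hνS hT hS hcomm k]

end HostKra

theorem HK_factors_eq_of_commuting_general {X : Type*} {𝒵T 𝒵S : MeasurableSpace X}
    [m : MeasurableSpace X] {μ : Measure X} [IsProbabilityMeasure μ] {T S : X → X}
    (hcomm : Function.Commute T S) (hergT : Ergodic T μ) (hergS : Ergodic S μ)
    {νT νS : ∀ k, Measure (HKBox X k)} (hνT : IsHKSeq μ T νT) (hνS : IsHKSeq μ S νS) {k : ℕ}
    (h𝒵T : 𝒵T ≤ m) (h𝒵S : 𝒵S ≤ m)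
    (hcharT : ∀ f : X → ℝ, Measurable[m] f → (∃ C, ∀ x, |f x| ≤ C) →
      (μ[f | 𝒵T] =ᵐ[μ] 0 ↔ HKseminorm νT (k + 1) f = 0))
    (hcharS : ∀ f : X → ℝ, Measurable[m] f → (∃ C, ∀ x, |f x| ≤ C) →
      (μ[f | 𝒵S] =ᵐ[μ] 0 ↔ HKseminorm νS (k + 1) f = 0))
    {f : X → ℝ} (hf : Measurable[m] f) (hb : ∃ C, ∀ x, |f x| ≤ C) :
    μ[f | 𝒵T] =ᵐ[μ] μ[f | 𝒵S] := by
  refine condExp_ae_eq_of_eq_zero_iff h𝒵T h𝒵S (fun g hg hgb ↦ ?_) hf hb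
  rw [hcharT g hg hgb, hcharS g hg hgb,
    HKseminorm_eq_of_commute hνT hνS hergT hergS hcomm (k + 1) g]

end

/-- For commuting invertible ergodic measure preserving transformations `T` and `S` of a
probability space, the Host–Kra factor σ-algebras coincide: if `𝒵T` and `𝒵S` are
sub-σ-algebras satisfying the characterizing property of `𝒵_k(X,T)` and `𝒵_k(X,S)`
(for `f ∈ L^∞`, `𝔼(f|𝒵) = 0` iff `⦀f⦀_{k+1} = 0`), then they define the same factor:
conditional expectations with respect to them agree. -/
theorem HK_factors_eq_of_commuting {X : Type*} [m : MeasurableSpace X]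
    (μ : Measure X) [IsProbabilityMeasure μ]
    (T S T' S' : X → X) (hT' : Measurable T') (hS' : Measurable S')
    (hTinv : Function.LeftInverse T' T ∧ Function.RightInverse T' T)
    (hSinv : Function.LeftInverse S' S ∧ Function.RightInverse S' S)
    (hcomm : T ∘ S = S ∘ T)
    (hergT : Ergodic T μ) (hergS : Ergodic S μ)
    (νT νS : ∀ k, Measure (HKBox X k))
    (hνT : IsHKSeq μ T νT) (hνS : IsHKSeq μ S νS)
    (k : ℕ) (hk : 1 ≤ k)
    (𝒵T 𝒵S : MeasurableSpace X) (h𝒵T : 𝒵T ≤ m) (h𝒵S : 𝒵S ≤ m)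
    (hcharT : ∀ f : X → ℝ, Measurable[m] f → (∃ C, ∀ x, |f x| ≤ C) →
      ((μ[f | 𝒵T]) =ᵐ[μ] 0 ↔ (@HKseminorm X m νT (k + 1) f) = 0))
    (hcharS : ∀ f : X → ℝ, Measurable[m] f → (∃ C, ∀ x, |f x| ≤ C) →
      ((μ[f | 𝒵S]) =ᵐ[μ] 0 ↔ (@HKseminorm X m νS (k + 1) f) = 0)) :
    ∀ f : X → ℝ, Measurable[m] f → (∃ C, ∀ x, |f x| ≤ C) →
      (μ[f | 𝒵T]) =ᵐ[μ] (μ[f | 𝒵S]) := by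
  intro f hf hb
  exact HK_factors_eq_of_commuting_general (m := m) (S := S) (fun x ↦ congrFun hcomm x) hergT hergS
    hνT hνS h𝒵T h𝒵S hcharT hcharS hf hb
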